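/- Let {Π_x^a : a = 1,…,m}, x = 1,…,N, be POVMs on ℂ^n and let ρ be a density matrix on ℂ^n. Then the vector P := (Tr(Π_x^a ρ))_{(x,a)} ∈ ℝ^{Nm} satisfies: for every k = 1,…,Nm, the sum of the k largest entries of P is at most s_k, where s_k := max over subsets T ⊆ {1,…,N}×{1,…,m} with |T| = k of the operator norm of Σ_{(x,a)∈T} Π_x^a; moreover Σ_{(x,a)} Tr(Π_x^a ρ) = N = s_{Nm}. Equivalently, P is majorized by the vector W := (s_1, s_2 − s_1, …, s_{Nm} − s_{Nm−1}) whenever the increments s_k − s_{k−1} are nonincreasing. -/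

import Mathlib

/-!
In an orthonormal eigenbasis `u` of a positive semidefinite `ρ` with eigenvalues `λ`, one has
`Tr (A ρ) = ∑ i, λ i * ⟪u i, A (u i)⟫`, whence `|Tr (A ρ)| ≤ ‖A‖ Tr ρ`. The `k` largest outcome
probabilities are indexed by a set `T` of size `k`, and their sum is `Re Tr ((∑ q ∈ T, Π q) ρ)`,
which is therefore at most `s k`. The first `k` increments of `s` telescope to `s k`, and the sum
of any `k` entries of `W` is at most the sum of its `k` largest ones.
-/

open scoped ComplexOrder

noncomputable section

/-- A density matrix: positive semidefinite with unit trace. -/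
def IsDensityMatrix {n : Type*} [Fintype n] [DecidableEq n] (ρ : Matrix n n ℂ) : Prop :=
  ρ.PosSemidef ∧ ρ.trace = 1

/-- The operator (spectral) norm of a complex matrix. -/
def opNorm {n : Type*} [Fintype n] [DecidableEq n] (M : Matrix n n ℂ) : ℝ :=
  ‖Matrix.toEuclideanCLM (𝕜 := ℂ) (n := n) M‖

/-- The decreasing rearrangement of a real vector. -/
def dSort {n : ℕ} (v : Fin n → ℝ) : Fin n → ℝ := fun i => v (Tuple.sort v i.rev)

/-- The sum of the `k` largest entries of a real vector. -/
def topSum {n : ℕ} (v : Fin n → ℝ) (k : ℕ) : ℝ :=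
  ∑ i ∈ Finset.univ.filter (fun i : Fin n => (i : ℕ) < k), dSort v i

section SortedSums

lemma sum_le_sum_of_antitone_of_isLowerSet {α M : Type*} [LinearOrder α] [AddCommGroup M]
    [PartialOrder M] [IsOrderedAddMonoid M] {f : α → M} (hf : Antitone f) {s t : Finset α}
    (ht : IsLowerSet (t : Set α)) (hst : s.card = t.card) :
    ∑ i ∈ s, f i ≤ ∑ i ∈ t, f i := by
  rw [← Finset.sum_sdiff_le_sum_sdiff, ← Finset.sum_coe_sort, ← Finset.sum_coe_sort (t \ s),
    ← (Finset.equivOfCardEq (Finset.card_sdiff_comm hst)).sum_comp]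
  refine Finset.sum_le_sum fun i _ => hf ?_
  obtain ⟨j, hj⟩ := Finset.equivOfCardEq (Finset.card_sdiff_comm hst) i
  have hi := i.2
  rw [Finset.mem_sdiff] at hi hj
  exact le_of_not_ge fun hij => hi.2 (ht hij hj.1)

variable {d k : ℕ}

lemma exists_dSort_eq_comp_perm (v : Fin d → ℝ) :
    ∃ σ : Equiv.Perm (Fin d), dSort v = v ∘ σ :=
  ⟨Fin.revPerm.trans (Tuple.sort v), rfl⟩

lemma antitone_dSort (v : Fin d → ℝ) : Antitone (dSort v) :=
  fun _ _ hij => Tuple.monotone_sort v (Fin.rev_le_rev.mpr hij)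

lemma card_filter_val_lt_of_le (hk : k ≤ d) :
    (Finset.univ.filter fun i : Fin d => (i : ℕ) < k).card = k := by
  rw [Fin.card_filter_val_lt, min_eq_right hk]

lemma exists_card_eq_topSum_eq_sum (v : Fin d → ℝ) (hk : k ≤ d) :
    ∃ T : Finset (Fin d), T.card = k ∧ topSum v k = ∑ i ∈ T, v i := by
  obtain ⟨σ, hσ⟩ := exists_dSort_eq_comp_perm v
  refine ⟨(Finset.univ.filter fun i : Fin d => (i : ℕ) < k).map σ.toEmbedding, ?_, ?_⟩
  · rw [Finset.card_map, card_filter_val_lt_of_le hk]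
  · simp [topSum, hσ]

lemma sum_le_topSum_card (v : Fin d → ℝ) (T : Finset (Fin d)) :
    ∑ i ∈ T, v i ≤ topSum v T.card := by
  obtain ⟨σ, hσ⟩ := exists_dSort_eq_comp_perm v
  calc ∑ i ∈ T, v i = ∑ i ∈ T.map σ.symm.toEmbedding, dSort v i := by simp [hσ]
    _ ≤ topSum v T.card := by
        refine sum_le_sum_of_antitone_of_isLowerSet (antitone_dSort v) ?_ ?_
        · intro i j hji hi
          simp only [Finset.coe_filter, Finset.mem_univ, true_and, Set.mem_ofPred_eq] at hi ⊢
          exact lt_of_le_of_lt hji hi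
        · rw [Finset.card_map, card_filter_val_lt_of_le (card_finset_fin_le T)]

lemma sub_le_topSum_increments (s : ℕ → ℝ) (hk : k ≤ d) :
    s k - s 0 ≤ topSum (fun i : Fin d => s (i + 1) - s i) k := by
  have hsum : ∑ i ∈ Finset.univ.filter (fun i : Fin d => (i : ℕ) < k), (s (i + 1) - s i) =
      s k - s 0 := by
    rw [← Finset.sum_range_sub, Finset.sum_filter,
      Fin.sum_univ_eq_sum_range (fun i => if i < k then s (i + 1) - s i else 0),
      ← Finset.sum_filter]
    congr 1
    ext i
    simp only [Finset.mem_filter, Finset.mem_range]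
    omega
  rw [← hsum]
  simpa only [card_filter_val_lt_of_le hk] using
    sum_le_topSum_card (fun i : Fin d => s (i + 1) - s i)
      (Finset.univ.filter fun i : Fin d => (i : ℕ) < k)

end SortedSums

section TraceDuality

variable {𝕜 n : Type*} [RCLike 𝕜] [Fintype n] [DecidableEq n]

lemma trace_eq_sum_inner_toEuclideanCLM {ι : Type*} [Fintype ι] (A : Matrix n n 𝕜)
    (b : OrthonormalBasis ι 𝕜 (EuclideanSpace 𝕜 n)) :
    A.trace = ∑ i, inner 𝕜 (b i) (Matrix.toEuclideanCLM (n := n) (𝕜 := 𝕜) A (b i)) := by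
  rw [← Matrix.trace_toLin_eq A (EuclideanSpace.basisFun n 𝕜).toBasis,
    LinearMap.trace_eq_sum_inner _ b]
  rfl

lemma trace_mul_eq_sum_eigenvalues_mul_inner (A : Matrix n n 𝕜) {ρ : Matrix n n 𝕜}
    (hρ : ρ.IsHermitian) :
    (A * ρ).trace = ∑ i, (hρ.eigenvalues i : 𝕜) * inner 𝕜 (hρ.eigenvectorBasis i)
      (Matrix.toEuclideanCLM (n := n) (𝕜 := 𝕜) A (hρ.eigenvectorBasis i)) := by
  have heigen (i : n) : Matrix.toEuclideanCLM (n := n) (𝕜 := 𝕜) ρ (hρ.eigenvectorBasis i) =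
      (hρ.eigenvalues i : 𝕜) • hρ.eigenvectorBasis i := by
    ext j
    simp [hρ.mulVec_eigenvectorBasis, RCLike.real_smul_eq_coe_mul]
  simp only [trace_eq_sum_inner_toEuclideanCLM _ hρ.eigenvectorBasis, map_mul,
    mul_apply_eq_comp, heigen, map_smul, inner_smul_right]

lemma norm_inner_apply_self_le {E : Type*} [SeminormedAddCommGroup E] [InnerProductSpace 𝕜 E]
    (T : E →L[𝕜] E) {u : E} (hu : ‖u‖ = 1) : ‖inner 𝕜 u (T u)‖ ≤ ‖T‖ := by
  simpa [hu] using (norm_inner_le_norm u (T u)).trans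
    (mul_le_mul_of_nonneg_left (T.le_opNorm u) (norm_nonneg u))

lemma norm_trace_mul_le_of_posSemidef (A : Matrix n n 𝕜) {ρ : Matrix n n 𝕜}
    (hρ : ρ.PosSemidef) :
    ‖(A * ρ).trace‖ ≤ RCLike.re ρ.trace * ‖Matrix.toEuclideanCLM (n := n) (𝕜 := 𝕜) A‖ := by
  rw [trace_mul_eq_sum_eigenvalues_mul_inner A hρ.1, hρ.1.trace_eq_sum_eigenvalues, map_sum,
    Finset.sum_mul]
  refine norm_sum_le_of_le _ fun i _ => ?_
  rw [norm_mul, RCLike.norm_ofReal, abs_of_nonneg (hρ.eigenvalues_nonneg i), RCLike.ofReal_re]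
  exact mul_le_mul_of_nonneg_left
    (norm_inner_apply_self_le _ (hρ.1.eigenvectorBasis.norm_eq_one i)) (hρ.eigenvalues_nonneg i)

end TraceDuality

section DensityMatrix

variable {n : Type*} [Fintype n] [DecidableEq n]

lemma IsDensityMatrix.re_trace_mul_le_opNorm {ρ : Matrix n n ℂ} (hρ : IsDensityMatrix ρ)
    (A : Matrix n n ℂ) : (A * ρ).trace.re ≤ opNorm A := by
  simpa [hρ.2, opNorm] using (Complex.re_le_norm _).trans (norm_trace_mul_le_of_posSemidef A hρ.1)

lemma IsDensityMatrix.nonempty {ρ : Matrix n n ℂ} (hρ : IsDensityMatrix ρ) : Nonempty n := by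
  by_contra hn
  have := not_nonempty_iff.mp hn
  simpa [Matrix.trace] using hρ.2

end DensityMatrix

section MaxOpNorm

variable {n ι : Type*} [Fintype n] [DecidableEq n]

lemma opNorm_smul_one [Nonempty n] (c : ℂ) : opNorm (c • (1 : Matrix n n ℂ)) = ‖c‖ := by
  rw [opNorm, map_smul, map_one, norm_smul, norm_one, mul_one]

/-- The quantity `s_k` of the majorization bound: the largest operator norm of a sum of `k` members
of the family `A`. It is `0` by the convention `sSup ∅ = 0` when `A` has fewer than `k` members. -/
def maxOpNorm (A : ι → Matrix n n ℂ) (k : ℕ) : ℝ :=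
  sSup {r : ℝ | ∃ T : Finset ι, T.card = k ∧ r = opNorm (∑ q ∈ T, A q)}

lemma opNorm_sum_le_maxOpNorm [Finite ι] (A : ι → Matrix n n ℂ) (T : Finset ι) :
    opNorm (∑ q ∈ T, A q) ≤ maxOpNorm A T.card := by
  refine le_csSup (Set.Finite.bddAbove ?_) ⟨T, rfl, rfl⟩
  refine (Set.finite_range fun T : Finset ι => opNorm (∑ q ∈ T, A q)).subset ?_
  rintro _ ⟨T, -, rfl⟩
  exact ⟨T, rfl⟩

lemma maxOpNorm_zero (A : ι → Matrix n n ℂ) : maxOpNorm A 0 = 0 := by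
  simp [maxOpNorm, opNorm]

lemma maxOpNorm_card [Fintype ι] (A : ι → Matrix n n ℂ) :
    maxOpNorm A (Fintype.card ι) = opNorm (∑ q, A q) := by
  simp [maxOpNorm, Finset.card_eq_iff_eq_univ]

end MaxOpNorm

section OutcomeVector

variable {n ι : Type*} [Fintype n]

/-- The vector `(Re Tr (A q ρ))_q`, which for a POVM `A` and a state `ρ` consists of the outcome
probabilities. -/
def outcomeVector (A : ι → Matrix n n ℂ) (ρ : Matrix n n ℂ) : ι → ℝ :=
  fun q => (A q * ρ).trace.re

lemma sum_outcomeVector (A : ι → Matrix n n ℂ) (ρ : Matrix n n ℂ) (T : Finset ι) :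
    ∑ q ∈ T, outcomeVector A ρ q = ((∑ q ∈ T, A q) * ρ).trace.re := by
  simp only [outcomeVector, Finset.sum_mul, Matrix.trace_sum, Complex.re_sum]

variable [DecidableEq n]

lemma topSum_outcomeVector_le_maxOpNorm [Finite ι] {d k : ℕ} (e : Fin d ↪ ι)
    (A : ι → Matrix n n ℂ) {ρ : Matrix n n ℂ} (hρ : IsDensityMatrix ρ) (hk : k ≤ d) :
    topSum (outcomeVector A ρ ∘ e) k ≤ maxOpNorm A k := by
  obtain ⟨T, rfl, hT⟩ := exists_card_eq_topSum_eq_sum (outcomeVector A ρ ∘ e) hk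
  calc topSum (outcomeVector A ρ ∘ e) T.card = ∑ q ∈ T.map e, outcomeVector A ρ q := by
        rw [hT, Finset.sum_map]; rfl
    _ ≤ opNorm (∑ q ∈ T.map e, A q) := by
        rw [sum_outcomeVector]
        exact hρ.re_trace_mul_le_opNorm _
    _ ≤ maxOpNorm A T.card := by
        simpa only [Finset.card_map] using opNorm_sum_le_maxOpNorm A (T.map e)

end OutcomeVector

theorem povm_prob_vector_submajorized_general {n ι : Type*} [Fintype n] [DecidableEq n]
    [Fintype ι] {d : ℕ} (e : Fin d ≃ ι) (A : ι → Matrix n n ℂ) {c : ℝ} (hc : 0 ≤ c)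
    (hA : ∑ q, A q = (c : ℂ) • (1 : Matrix n n ℂ)) {ρ : Matrix n n ℂ} (hρ : IsDensityMatrix ρ) :
    (∀ k ≤ d, topSum (outcomeVector A ρ ∘ e) k ≤ maxOpNorm A k) ∧
    ∑ i, outcomeVector A ρ (e i) = c ∧ maxOpNorm A d = c ∧
    (∀ k ≤ d, topSum (outcomeVector A ρ ∘ e) k ≤
      topSum (fun i : Fin d => maxOpNorm A (i + 1) - maxOpNorm A i) k) ∧
    ∑ i, outcomeVector A ρ (e i) = ∑ i : Fin d, (maxOpNorm A (i + 1) - maxOpNorm A i) := by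
  have htop (k : ℕ) (hk : k ≤ d) : topSum (outcomeVector A ρ ∘ e) k ≤ maxOpNorm A k :=
    topSum_outcomeVector_le_maxOpNorm e.toEmbedding A hρ hk
  have hsum : ∑ i, outcomeVector A ρ (e i) = c := by
    rw [e.sum_comp (outcomeVector A ρ), sum_outcomeVector, hA]
    simp [hρ.2]
  have hmax : maxOpNorm A d = c := by
    have := hρ.nonempty
    rw [← Fintype.card_fin d, Fintype.card_congr e, maxOpNorm_card, hA, opNorm_smul_one,
      Complex.norm_of_nonneg hc]
  refine ⟨htop, hsum, hmax, fun k hk => (htop k hk).trans ?_, ?_⟩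
  · simpa only [maxOpNorm_zero, sub_zero] using sub_le_topSum_increments (maxOpNorm A) hk
  · rw [hsum, Fin.sum_univ_eq_sum_range (fun i => maxOpNorm A (i + 1) - maxOpNorm A i),
      Finset.sum_range_sub, maxOpNorm_zero, sub_zero, hmax]

/-- **Direct-sum majorization bound for POVM outcome probabilities (state-independent).**
The probability vector `P = (Tr(Π_x^a ρ))_{(x,a)}` has its `k` largest entries summing to at
most `s_k`, the total sum is `N = s_{Nm}`, and (equivalently) whenever the increments of `s`
are nonincreasing, `P` is majorized by `W = (s_1, s_2 − s_1, …)`. -/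
theorem povm_prob_vector_submajorized
    (n N m : ℕ) (hn : 1 ≤ n) (hN : 1 ≤ N) (hm : 1 ≤ m)
    (Pv : Fin N → Fin m → Matrix (Fin n) (Fin n) ℂ)
    (hPvpos : ∀ x a, (Pv x a).PosSemidef)
    (hPvsum : ∀ x, ∑ a, Pv x a = (1 : Matrix (Fin n) (Fin n) ℂ))
    (ρ : Matrix (Fin n) (Fin n) ℂ) (hρ : IsDensityMatrix ρ)
    (P : Fin (N * m) → ℝ)
    (hP : P = fun i =>
      (Matrix.trace (Pv (finProdFinEquiv.symm i).1 (finProdFinEquiv.symm i).2 * ρ)).re)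
    (s : ℕ → ℝ)
    (hs : ∀ k, s k = sSup { r : ℝ | ∃ T : Finset (Fin N × Fin m), T.card = k ∧
      r = opNorm (∑ q ∈ T, Pv q.1 q.2) })
    (W : Fin (N * m) → ℝ) (hW : W = fun i : Fin (N * m) => s ((i : ℕ) + 1) - s (i : ℕ)) :
    (∀ k, 1 ≤ k → k ≤ N * m → topSum P k ≤ s k) ∧
    (∑ i, P i = N) ∧ s (N * m) = N ∧
    ((∀ k, 1 ≤ k → k < N * m → s (k + 1) - s k ≤ s k - s (k - 1)) →
      (∀ k, 1 ≤ k → k ≤ N * m → topSum P k ≤ topSum W k) ∧ ∑ i, P i = ∑ i, W i) := by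
  obtain rfl : s = maxOpNorm fun q : Fin N × Fin m => Pv q.1 q.2 := funext hs
  subst hP hW
  have hsumPv : ∑ q : Fin N × Fin m, Pv q.1 q.2 =
      ((N : ℝ) : ℂ) • (1 : Matrix (Fin n) (Fin n) ℂ) := by
    simp [Fintype.sum_prod_type, hPvsum, Nat.cast_smul_eq_nsmul]
  obtain ⟨htop, hsum, hmax, hmaj, htotal⟩ :=
    povm_prob_vector_submajorized_general finProdFinEquiv.symm (fun q => Pv q.1 q.2)
      N.cast_nonneg hsumPv hρ
  exact ⟨fun k _ => htop k, hsum, hmax, fun _ => ⟨fun k _ => hmaj k, htotal⟩⟩
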